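/- arXiv:1203.0253 — 2 statements merged into one kernel-verified Lean document; each statement's English description precedes it below -/
import Mathlib

section
/- Let f ∈ ℚ[X₁,…,Xₙ] and set d = ⌈deg(f)/2⌉. Then f is not a sum of squares of real polynomials if and only if there exists a rational sequence ŷ ∈ ℚ^m with m = C(n+2d, 2d), indexed by multi-indices of degree ≤ 2d, whose associated linear form L_ŷ satisfies L_ŷ(u²) ≥ 0 for every polynomial u ∈ ℝ[X₁,…,Xₙ] of total degree ≤ d, and L_ŷ(f) < 0. -/
open MvPolynomial

/-- `p` is a sum of squares of polynomials. -/
def IsSOS (n : ℕ) (p : MvPolynomial (Fin n) ℝ) : Prop :=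
  ∃ (l : ℕ) (u : Fin l → MvPolynomial (Fin n) ℝ), p = ∑ i, u i ^ 2

/-- The linear form `L_y(p) = Σ_α y_α p_α` associated to a sequence `y`. -/
noncomputable def LForm (n : ℕ) (y : (Fin n →₀ ℕ) → ℝ)
    (p : MvPolynomial (Fin n) ℝ) : ℝ :=
  ∑ α ∈ p.support, y α * p.coeff α

/-!
A linear form that is nonnegative on squares of degree at most `2 * d` is nonnegative on sums of
squares of degree at most `2 * d`, because the leading terms of squares cannot cancel over `ℝ`.

Conversely, let `p` of degree at most `2 * d` not be a sum of squares, and let `K` consist of `-p`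
and of the squares `u ^ 2`, with `u` on the unit sphere of the polynomials of degree at most `d`.
The nonzero sums of squares form a convex set, since a sum of squares vanishes only if every term
does; so a convex combination of elements of `K` equal to `0` would exhibit `p` as a sum of
squares. As `K` is compact, so is its convex hull, and some linear form is positive on `K`. Being
positive on a compact set is an open condition on a linear form, so the form may be taken rational.
-/

open Matrix Set

section Convex

variable {E : Type*} [AddCommGroup E] [Module ℝ E] [FiniteDimensional ℝ E]

theorem convexHull_eq_biUnion_image_stdSimplex (s : Set E) :
    convexHull ℝ s = ⋃ k ∈ Iic (Module.finrank ℝ E + 1),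
      (fun p : (Fin k → ℝ) × (Fin k → E) => ∑ i, p.1 i • p.2 i) ''
        (stdSimplex ℝ (Fin k) ×ˢ univ.pi fun _ => s) := by
  refine Subset.antisymm (fun x hx => ?_) (iUnion₂_subset fun k _ => ?_)
  · obtain ⟨ι, _, z, w, hz, hind, hw, hw1, rfl⟩ := eq_pos_convex_span_of_mem_convexHull hx
    have hcard : Fintype.card ι ≤ Module.finrank ℝ E + 1 :=
      hind.card_le_finrank_succ.trans (Nat.add_le_add_right (Submodule.finrank_le _) 1)
    let e := Fintype.equivFin ι
    refine mem_biUnion hcard ⟨(w ∘ e.symm, z ∘ e.symm), ⟨⟨fun i => (hw _).le, ?_⟩, ?_⟩, ?_⟩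
    · exact (e.symm.sum_comp w).trans hw1
    · exact fun i _ => hz (mem_range_self _)
    · exact e.symm.sum_comp fun i => w i • z i
  · rintro _ ⟨⟨w, z⟩, ⟨hw, hz⟩, rfl⟩
    exact (convex_convexHull ℝ s).sum_mem (fun i _ => hw.1 i) hw.2
      fun i _ => subset_convexHull ℝ s (hz i trivial)

theorem isCompact_convexHull [TopologicalSpace E] [ContinuousAdd E] [ContinuousSMul ℝ E]
    {s : Set E} (hs : IsCompact s) : IsCompact (convexHull ℝ s) := by
  rw [convexHull_eq_biUnion_image_stdSimplex]
  refine (finite_Iic _).isCompact_biUnion fun k _ => ?_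
  exact ((isCompact_stdSimplex ℝ _).prod (isCompact_univ_pi fun _ => hs)).image (by fun_prop)

end Convex

section Separation

variable {ι : Type*} [Fintype ι]

theorem exists_forall_dotProduct_pos {s : Set (ι → ℝ)} (hs : IsCompact s)
    (h0 : 0 ∉ convexHull ℝ s) : ∃ y : ι → ℝ, ∀ x ∈ s, 0 < y ⬝ᵥ x := by
  classical
  obtain ⟨L, c, hc, hL⟩ := geometric_hahn_banach_point_closed (convex_convexHull ℝ s)
    (isCompact_convexHull hs).isClosed h0
  rw [map_zero] at hc
  obtain ⟨y, hy⟩ := (dotProductEquiv ℝ ι).surjective L.toLinearMap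
  refine ⟨y, fun x hx => ?_⟩
  have hyx : y ⬝ᵥ x = L x := LinearMap.congr_fun hy x
  exact hyx ▸ hc.trans (hL x (subset_convexHull ℝ s hx))

theorem isOpen_forall_dotProduct_pos {s : Set (ι → ℝ)} (hs : IsCompact s) :
    IsOpen {y : ι → ℝ | ∀ x ∈ s, 0 < y ⬝ᵥ x} := by
  refine isOpen_iff_mem_nhds.2 fun y hy =>
    hs.eventually_forall_of_forall_eventually fun x hx => ?_
  have hcont : Continuous fun p : (ι → ℝ) × (ι → ℝ) => p.1 ⬝ᵥ p.2 := by fun_prop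
  exact hcont.continuousAt.eventually (lt_mem_nhds (hy x hx))

theorem exists_rat_forall_dotProduct_pos {s : Set (ι → ℝ)} (hs : IsCompact s)
    (h0 : 0 ∉ convexHull ℝ s) : ∃ r : ι → ℚ, ∀ x ∈ s, 0 < (fun i => (r i : ℝ)) ⬝ᵥ x := by
  have hdense : DenseRange (Pi.map fun _ => Rat.cast : (ι → ℚ) → ι → ℝ) :=
    DenseRange.piMap fun _ => Rat.denseRange_cast
  exact hdense.exists_mem_open (isOpen_forall_dotProduct_pos hs)
    (exists_forall_dotProduct_pos hs h0)

theorem exists_rat_dotProduct_bilin_self_nonneg {E : Type*} [NormedAddCommGroup E]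
    [NormedSpace ℝ E] [FiniteDimensional ℝ E] (B : E →ₗ[ℝ] E →ₗ[ℝ] ι → ℝ) (v : ι → ℝ)
    (h0 : 0 ∉ convexHull ℝ (insert (-v) ((fun c => B c c) '' {0}ᶜ))) :
    ∃ r : ι → ℚ, (∀ c, 0 ≤ (fun i => (r i : ℝ)) ⬝ᵥ B c c) ∧ (fun i => (r i : ℝ)) ⬝ᵥ v < 0 := by
  have hB : Continuous fun c => B c c :=
    (LinearMap.toContinuousLinearMap.toLinearMap ∘ₗ B).continuous_of_finiteDimensional.clm_apply
      continuous_id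
  let K := insert (-v) ((fun c => B c c) '' Metric.sphere 0 1)
  have hK : IsCompact K := ((isCompact_sphere 0 1).image hB).insert _
  have hK0 : 0 ∉ convexHull ℝ K := fun h => h0 <| convexHull_mono
    (insert_subset_insert (image_mono fun c hc => ne_zero_of_mem_unit_sphere ⟨c, hc⟩)) h
  obtain ⟨r, hr⟩ := exists_rat_forall_dotProduct_pos hK hK0
  refine ⟨r, fun c => ?_, ?_⟩
  · rcases eq_or_ne c 0 with rfl | hc
    · simp
    have hsphere : ‖c‖⁻¹ • c ∈ Metric.sphere (0 : E) 1 := by simp [norm_smul, hc]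
    have hpos := hr _ (mem_insert_of_mem _ (mem_image_of_mem _ hsphere))
    simp only [map_smul, LinearMap.smul_apply, dotProduct_smul, smul_eq_mul] at hpos
    exact (pos_of_mul_pos_right (pos_of_mul_pos_right hpos (by positivity)) (by positivity)).le
  · simpa using hr _ (mem_insert _ _)

end Separation

section SumsOfSquares

theorem isSumSq_iff_exists_sum_sq {R : Type*} [CommSemiring R] {s : R} :
    IsSumSq s ↔ ∃ (l : ℕ) (u : Fin l → R), s = ∑ i, u i ^ 2 := by
  refine ⟨fun hs => ?_, ?_⟩
  · induction hs with
    | zero => exact ⟨0, Fin.elim0, by simp⟩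
    | sq_add a _ ih =>
      obtain ⟨l, u, rfl⟩ := ih
      exact ⟨l + 1, Fin.cons a u, by simp [Fin.sum_univ_succ, sq]⟩
  · rintro ⟨l, u, rfl⟩
    exact IsSumSq.sum_sq _ u

theorem eq_zero_of_sum_sq_eq_zero {R ι : Type*} [CommRing R] [IsFormallyReal R] [Fintype ι]
    {u : ι → R} (hu : ∑ i, u i ^ 2 = 0) (j : ι) : u j = 0 := by
  classical
  rw [← Finset.add_sum_erase _ _ (Finset.mem_univ j)] at hu
  exact pow_eq_zero_iff two_ne_zero |>.1 <| IsFormallyReal.eq_zero_of_add_right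
    (IsSquare.sq _).isSumSq (IsSumSq.sum_sq _ _) hu

variable {A : Type*} [CommRing A] [Algebra ℝ A]

theorem isSumSq_smul {s : A} (hs : IsSumSq s) {t : ℝ} (ht : 0 ≤ t) : IsSumSq (t • s) := by
  rw [Algebra.smul_def, ← Real.mul_self_sqrt ht, map_mul]
  exact (IsSumSq.mul_self _).mul hs

variable [IsFormallyReal A]

theorem convex_isSumSq_diff_zero : Convex ℝ {s : A | IsSumSq s ∧ s ≠ 0} := by
  rintro s ⟨hs, hs0⟩ t ⟨ht, ht0⟩ a b ha hb hab
  have has := isSumSq_smul hs ha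
  have hbt := isSumSq_smul ht hb
  refine ⟨has.add hbt, fun h => ?_⟩
  have ha0 := (smul_eq_zero.1 (IsFormallyReal.eq_zero_of_add_right has hbt h)).resolve_right hs0
  have hb0 := (smul_eq_zero.1 (IsFormallyReal.eq_zero_of_add_left has hbt h)).resolve_right ht0
  simp [ha0, hb0] at hab

theorem zero_notMem_convexHull_insert_neg {p : A} (hp : ¬ IsSumSq p) :
    0 ∉ convexHull ℝ (insert (-p) {s | IsSumSq s ∧ s ≠ 0}) := by
  have hp0 : p ≠ 0 := by
    rintro rfl
    exact hp .zero
  have : Nontrivial A := nontrivial_of_ne p 0 hp0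
  have hne : {s : A | IsSumSq s ∧ s ≠ 0}.Nonempty := ⟨1, .one, one_ne_zero⟩
  rw [convexHull_insert hne, convex_isSumSq_diff_zero.convexHull_eq,
    convexJoin_singleton_left]
  intro h
  obtain ⟨s, ⟨hs, hs0⟩, a, b, ha, hb, hab, h⟩ := mem_iUnion₂.1 h
  have hbs : b • s = a • p := by rwa [smul_neg, neg_add_eq_zero, eq_comm] at h
  have ha0 : a ≠ 0 := by
    rintro rfl
    simp_all
  refine hp ?_
  rw [← inv_smul_smul₀ ha0 p, ← hbs]
  exact isSumSq_smul (isSumSq_smul hs hb) (inv_nonneg.2 ha)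

theorem exists_rat_dotProduct_sq_nonneg {ι : Type*} [Fintype ι] {U V : Submodule ℝ A}
    [FiniteDimensional ℝ U] (hUV : ∀ u ∈ U, u ^ 2 ∈ V) {φ : A →ₗ[ℝ] ι → ℝ} (hφ : InjOn φ V)
    {p : A} (hpV : p ∈ V) (hp : ¬ IsSumSq p) :
    ∃ r : ι → ℚ, (∀ u ∈ U, 0 ≤ (fun i => (r i : ℝ)) ⬝ᵥ φ (u ^ 2)) ∧
      (fun i => (r i : ℝ)) ⬝ᵥ φ p < 0 := by
  -- Any norm on `U` will do: it only provides a compact unit sphere.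
  let e := (Module.finBasis ℝ U).equivFun
  let _ : NormedAddCommGroup U := .induced U _ e e.injective
  let _ : NormedSpace ℝ U := .induced ℝ U _ e
  let B : U →ₗ[ℝ] U →ₗ[ℝ] ι → ℝ := ((LinearMap.mul ℝ A).compl₁₂ U.subtype U.subtype).compr₂ φ
  have hB (u : U) : B u u = φ (u.1 ^ 2) := by rw [sq]; rfl
  let K : Set A := insert (-p) ((fun u : U => u.1 ^ 2) '' {0}ᶜ)
  have hKV : convexHull ℝ K ⊆ V := by
    refine convexHull_min (insert_subset (V.neg_mem hpV) ?_) V.convex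
    rintro _ ⟨u, -, rfl⟩
    exact hUV u u.2
  have hK : 0 ∉ convexHull ℝ K := by
    refine fun h => zero_notMem_convexHull_insert_neg hp (convexHull_mono ?_ h)
    refine insert_subset_insert ?_
    rintro _ ⟨u, hu, rfl⟩
    exact ⟨(IsSquare.sq u.1).isSumSq, pow_ne_zero 2 (by simpa using hu)⟩
  have hφK : φ '' K = insert (-φ p) ((fun u => B u u) '' {0}ᶜ) := by
    simp only [K, hB, image_insert_eq, image_image, map_neg]
  obtain ⟨r, hr, hrp⟩ := exists_rat_dotProduct_bilin_self_nonneg B (φ p) <| by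
    rw [← hφK, ← φ.image_convexHull]
    rintro ⟨q, hq, hq0⟩
    rw [hφ (hKV hq) V.zero_mem (hq0.trans φ.map_zero.symm)] at hq
    exact hK hq
  exact ⟨r, fun u hu => hB ⟨u, hu⟩ ▸ hr ⟨u, hu⟩, hrp⟩

end SumsOfSquares

section MvPolynomial

theorem totalDegree_map_le {σ R S : Type*} [CommSemiring R] [CommSemiring S] (φ : R →+* S)
    (p : MvPolynomial σ R) : (p.map φ).totalDegree ≤ p.totalDegree :=
  Finset.sup_mono (support_map_subset φ p)

theorem totalDegree_sq_le {σ R : Type*} [CommSemiring R] {d : ℕ} {u : MvPolynomial σ R}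
    (hu : u.totalDegree ≤ d) : (u ^ 2).totalDegree ≤ 2 * d :=
  (totalDegree_pow u 2).trans (Nat.mul_le_mul_left 2 hu)

variable {σ R ι : Type*} [CommRing R] [IsFormallyReal R] [Fintype ι]

theorem exists_coeff_add_self_sum_sq_ne_zero (m : MonomialOrder σ) (u : ι → MvPolynomial σ R)
    {j : ι} (hj : u j ≠ 0) :
    ∃ α, m.toSyn (m.degree (u j)) ≤ m.toSyn α ∧ (∑ i, u i ^ 2).coeff (α + α) ≠ 0 := by
  classical
  obtain ⟨k, hk, hmax⟩ := Finset.exists_max_image (Finset.univ.filter (u · ≠ 0))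
    (fun i => m.toSyn (m.degree (u i))) ⟨j, by simpa using hj⟩
  simp only [Finset.mem_filter, Finset.mem_univ, true_and] at hk hmax
  have hdeg (i : ι) : m.toSyn (m.degree (u i)) ≤ m.toSyn (m.degree (u k)) := by
    by_cases hi : u i = 0
    · simp [hi]
    · exact hmax i hi
  have hcoeff : (∑ i, u i ^ 2).coeff (m.degree (u k) + m.degree (u k)) =
      ∑ i, (u i).coeff (m.degree (u k)) ^ 2 := by
    simp only [coeff_sum, sq, fun i => m.coeff_mul_of_add_of_degree_le (hdeg i) (hdeg i)]
  refine ⟨m.degree (u k), hdeg j, fun h => ?_⟩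
  exact m.coeff_degree_ne_zero_iff.2 hk (eq_zero_of_sum_sq_eq_zero (hcoeff.symm.trans h) k)

variable [LinearOrder σ] [WellFoundedGT σ]

theorem two_mul_totalDegree_le_totalDegree_sum_sq (u : ι → MvPolynomial σ R) (j : ι) :
    2 * (u j).totalDegree ≤ (∑ i, u i ^ 2).totalDegree := by
  rcases eq_or_ne (u j) 0 with hj | hj
  · simp [hj]
  obtain ⟨α, hα, hcoeff⟩ := exists_coeff_add_self_sum_sq_ne_zero .degLex u hj
  calc 2 * (u j).totalDegree
      = 2 * (MonomialOrder.degLex.degree (u j)).degree := by rw [degree_degLexDegree]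
    _ ≤ 2 * α.degree := Nat.mul_le_mul_left 2 (Finsupp.DegLex.monotone_degree hα)
    _ = (α + α).degree := by rw [map_add, two_mul]
    _ ≤ (∑ i, u i ^ 2).totalDegree := le_totalDegree (mem_support_iff.2 hcoeff)

instance isFormallyReal_mvPolynomial : IsFormallyReal (MvPolynomial σ R) := by
  refine .of_eq_zero_of_eq_zero_of_mul_self_add fun {s a} hs h => ?_
  obtain ⟨l, u, rfl⟩ := isSumSq_iff_exists_sum_sq.1 hs
  by_contra ha
  let v : Fin (l + 1) → MvPolynomial σ R := Fin.cons a u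
  obtain ⟨α, -, hα⟩ := exists_coeff_add_self_sum_sq_ne_zero .degLex v (j := 0) ha
  refine hα ?_
  rw [Fin.sum_univ_succ]
  simpa [v, sq] using congrArg (coeff (α + α)) h

end MvPolynomial

section LForm

variable {n : ℕ}

theorem isSOS_iff_isSumSq {p : MvPolynomial (Fin n) ℝ} : IsSOS n p ↔ IsSumSq p :=
  isSumSq_iff_exists_sum_sq.symm

theorem LForm_eq_constr (y : (Fin n →₀ ℕ) → ℝ) (p : MvPolynomial (Fin n) ℝ) :
    LForm n y p = (basisMonomials (Fin n) ℝ).constr ℝ y p := by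
  rw [Module.Basis.constr_apply]
  exact Finset.sum_congr rfl fun α _ => mul_comm _ _

theorem LForm_sum {ι : Type*} (s : Finset ι) (y : (Fin n →₀ ℕ) → ℝ)
    (p : ι → MvPolynomial (Fin n) ℝ) : LForm n y (∑ i ∈ s, p i) = ∑ i ∈ s, LForm n y (p i) := by
  simp only [LForm_eq_constr, map_sum]

theorem LForm_nonneg_of_isSOS {d : ℕ} {y : (Fin n →₀ ℕ) → ℝ}
    (hy : ∀ u : MvPolynomial (Fin n) ℝ, u.totalDegree ≤ d → 0 ≤ LForm n y (u ^ 2))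
    {p : MvPolynomial (Fin n) ℝ} (hp : IsSOS n p) (hdeg : p.totalDegree ≤ 2 * d) :
    0 ≤ LForm n y p := by
  obtain ⟨l, u, rfl⟩ := hp
  rw [LForm_sum]
  refine Finset.sum_nonneg fun i _ => hy (u i) ?_
  have := two_mul_totalDegree_le_totalDegree_sum_sq u i
  lia

/-- The finite set of exponents of total degree at most `d`, indexing the coefficients of the
polynomials of degree at most `d`. -/
noncomputable def exponentsLE (n d : ℕ) : Finset (Fin n →₀ ℕ) :=
  (Finsupp.finite_of_degree_le d).toFinset

/-- The coefficients of a polynomial in degrees at most `d`, the higher ones being forgotten. -/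
noncomputable def coeffsLE (n d : ℕ) : MvPolynomial (Fin n) ℝ →ₗ[ℝ] (exponentsLE n d → ℝ) :=
  LinearMap.pi fun α => lcoeff ℝ α.1

theorem support_subset_exponentsLE {d : ℕ} {p : MvPolynomial (Fin n) ℝ} (hp : p.totalDegree ≤ d) :
    p.support ⊆ exponentsLE n d := fun _ hα =>
  (Finsupp.finite_of_degree_le d).mem_toFinset.2 ((le_totalDegree hα).trans hp)

theorem injOn_coeffsLE (n d : ℕ) : InjOn (coeffsLE n d) (restrictTotalDegree (Fin n) ℝ d) := by
  refine LinearMap.injOn_of_disjoint_ker subset_rfl ?_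
  refine Submodule.disjoint_def.2 fun p hp hp0 => ?_
  ext α
  by_contra hα
  have hmem := support_subset_exponentsLE ((mem_restrictTotalDegree _ _ _).1 hp)
    (mem_support_iff.2 hα)
  exact hα (congrFun hp0 ⟨α, hmem⟩)

theorem exists_LForm_eq_dotProduct_coeffsLE {d : ℕ} (r : exponentsLE n d → ℚ) :
    ∃ y : (Fin n →₀ ℕ) → ℚ, ∀ p : MvPolynomial (Fin n) ℝ, p.totalDegree ≤ d →
      LForm n (fun α => (y α : ℝ)) p = (fun α => (r α : ℝ)) ⬝ᵥ coeffsLE n d p := by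
  refine ⟨Function.extend Subtype.val r 0, fun p hp => ?_⟩
  rw [LForm, Finset.sum_subset (support_subset_exponentsLE hp), ← Finset.sum_coe_sort]
  · simp only [Subtype.val_injective.extend_apply]
    rfl
  · intro α _ hα
    rw [notMem_support_iff.1 hα, mul_zero]

theorem statement13_general (n d : ℕ) {p : MvPolynomial (Fin n) ℝ} (hp : p.totalDegree ≤ 2 * d) :
    ¬ IsSOS n p ↔
      ∃ yhat : (Fin n →₀ ℕ) → ℚ,
        (∀ u : MvPolynomial (Fin n) ℝ, u.totalDegree ≤ d →
          0 ≤ LForm n (fun α => (yhat α : ℝ)) (u ^ 2)) ∧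
        LForm n (fun α => (yhat α : ℝ)) p < 0 := by
  refine ⟨fun hnot => ?_, fun ⟨y, hy, hneg⟩ hsos =>
    (LForm_nonneg_of_isSOS hy hsos hp).not_gt hneg⟩
  obtain ⟨r, hr, hrp⟩ := exists_rat_dotProduct_sq_nonneg
    (U := restrictTotalDegree (Fin n) ℝ d) (V := restrictTotalDegree (Fin n) ℝ (2 * d))
    (by simpa only [mem_restrictTotalDegree] using fun u => totalDegree_sq_le)
    (injOn_coeffsLE n (2 * d)) ((mem_restrictTotalDegree _ _ _).2 hp) (isSOS_iff_isSumSq.not.1 hnot)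
  obtain ⟨y, hy⟩ := exists_LForm_eq_dotProduct_coeffsLE r
  refine ⟨y, fun u hu => ?_, ?_⟩
  · rw [hy _ (totalDegree_sq_le hu)]
    exact hr u ((mem_restrictTotalDegree _ _ _).2 hu)
  · rwa [hy p hp]

end LForm

/-- for `f ∈ ℚ[X]` and `d = ⌈deg f / 2⌉`, `f` is not a sum of squares
of real polynomials iff there is a rational sequence `ŷ` (indexed by multi-indices
of degree `≤ 2d`; here defined on all multi-indices) with `L_ŷ(u²) ≥ 0` for every
real polynomial `u` of total degree `≤ d`, and `L_ŷ(f) < 0`. -/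
theorem statement13 (n : ℕ) (f : MvPolynomial (Fin n) ℚ) :
    ¬ IsSOS n (f.map (algebraMap ℚ ℝ)) ↔
      ∃ yhat : (Fin n →₀ ℕ) → ℚ,
        (∀ u : MvPolynomial (Fin n) ℝ, u.totalDegree ≤ (f.totalDegree + 1) / 2 →
          0 ≤ LForm n (fun α => (yhat α : ℝ)) (u ^ 2)) ∧
        LForm n (fun α => (yhat α : ℝ)) (f.map (algebraMap ℚ ℝ)) < 0 := by
  exact statement13_general n ((f.totalDegree + 1) / 2) <|
    (totalDegree_map_le (algebraMap ℚ ℝ) f).trans (by lia)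
end

section
/- Let n = 5 and in ℝ[X₁,…,X₅] define M₂ = Σ_{i=1}^5 X_i², M₄ = Σ_{i=1}^5 X_i⁴, M₆ = Σ_{i=1}^5 X_i⁶, and f_{5,3} = 12·M₆ − 7·M₂·M₄ + M₂³. Then there do not exist polynomials u₁,…,u_l, v₁,…,v_{l′} ∈ ℝ[X₁,…,X₅] with deg(v_j) ≤ 2 for every j and Σ_j v_j² ≠ 0 such that f_{5,3} · Σ_j v_j² = Σ_i u_i². In other words, f_{5,3} admits no Hilbert–Artin representation as a fraction of sums of squares with denominator of degree ≤ 4. -/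
open MvPolynomial

/-- The power sum `M_{n,r} = Σᵢ Xᵢʳ`. -/
noncomputable def powerSum (n r : ℕ) : MvPolynomial (Fin n) ℝ :=
  ∑ i : Fin n, X i ^ r

/-!
Evaluate a putative representation at the vectors `z` with entries in `{0, ±1}`. If `z` has `m`
nonzero entries, then `f_{n,k}(z) = m (m - k) (m - k - 1)`; for `k = 3` every `uᵢ` therefore
vanishes at `z` when `m` is `3` or `4`. After homogenising, `uᵢ` has degree `5`, so it is killed by
three second differences in distinct coordinate directions. Together with its zeros and its oddness
this determines `uᵢ(e_a ± e_b)` from `uᵢ(e_a)` and `uᵢ(e_b)`. Summing squares over `i` and using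
that `f_{n,3}` takes the values `6` and `4` for `m = 1` and `m = 2` gives
`3 ∑ⱼ (vⱼ(e_a + e_b)² + vⱼ(e_a - e_b)²) = ∑ⱼ (vⱼ(e_a)² + vⱼ(e_b)²)` for `a ≠ b`, an identity that
forces the quadratic forms `vⱼ` to vanish.
-/

section Degree

variable {σ R : Type*} [CommSemiring R] {p q : MvPolynomial σ R}

theorem homogeneousComponent_mul_of_totalDegree_le {a b : ℕ} (hp : p.totalDegree ≤ a)
    (hq : q.totalDegree ≤ b) :
    homogeneousComponent (a + b) (p * q) =
      homogeneousComponent a p * homogeneousComponent b q := by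
  classical
  ext m
  by_cases hm : m.degree = a + b
  · simp only [coeff_homogeneousComponent, if_pos hm, coeff_mul]
    refine Finset.sum_congr rfl fun ⟨x, y⟩ hxy => ?_
    have hadd : x.degree + y.degree = a + b := by
      rw [← map_add, Finset.HasAntidiagonal.mem_antidiagonal.mp hxy, hm]
    rcases lt_trichotomy a x.degree with hx | hx | hx
    · rw [if_neg hx.ne', zero_mul, coeff_eq_zero_of_totalDegree_lt (hp.trans_lt hx), zero_mul]
    · have hy : y.degree = b := by omega
      rw [if_pos hx.symm, if_pos hy]
    · have hy : b < y.degree := by omega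
      rw [if_neg hy.ne', mul_zero, coeff_eq_zero_of_totalDegree_lt (hq.trans_lt hy), mul_zero]
  · rw [coeff_homogeneousComponent, if_neg hm]
    exact (((homogeneousComponent_isHomogeneous a p).mul
      (homogeneousComponent_isHomogeneous b q)).coeff_eq_zero hm).symm

theorem homogeneousComponent_totalDegree_ne_zero (hp : p ≠ 0) :
    homogeneousComponent p.totalDegree p ≠ 0 := by
  obtain ⟨m, hm, hdeg⟩ := p.support.exists_mem_eq_sup (support_nonempty.mpr hp) fun m => m.degree
  have hdeg : p.totalDegree = m.degree := hdeg
  rw [ne_zero_iff]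
  refine ⟨m, ?_⟩
  rwa [coeff_homogeneousComponent, if_pos hdeg.symm, ← mem_support_iff]

theorem exists_ne_zero_forall_totalDegree_le {ι : Type*} [Finite ι] {v : ι → MvPolynomial σ R}
    (hv : ∃ i, v i ≠ 0) : ∃ i, v i ≠ 0 ∧ ∀ j, (v j).totalDegree ≤ (v i).totalDegree := by
  obtain ⟨i, hi, hmax⟩ := Set.exists_max_image {i | v i ≠ 0} (fun i => (v i).totalDegree)
    (Set.toFinite _) hv
  refine ⟨i, hi, fun j => ?_⟩
  by_cases hj : v j = 0
  · simp [hj]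
  · exact hmax j hj

theorem totalDegree_sum_sq_le {ι : Type*} [Fintype ι] {v : ι → MvPolynomial σ R} {d : ℕ}
    (hv : ∀ i, (v i).totalDegree ≤ d) : (∑ i, v i ^ 2).totalDegree ≤ 2 * d :=
  totalDegree_finsetSum_le fun i _ => (totalDegree_pow _ _).trans (Nat.mul_le_mul_left 2 (hv i))

theorem homogeneousComponent_sum_sq {ι : Type*} [Fintype ι] {v : ι → MvPolynomial σ R} {d : ℕ}
    (hv : ∀ i, (v i).totalDegree ≤ d) :
    homogeneousComponent (2 * d) (∑ i, v i ^ 2) = ∑ i, homogeneousComponent d (v i) ^ 2 := by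
  simp only [map_sum, sq, two_mul, homogeneousComponent_mul_of_totalDegree_le (hv _) (hv _)]

end Degree

theorem eval_neg_of_isHomogeneous {σ R : Type*} [CommRing R] {p : MvPolynomial σ R} {d : ℕ}
    (hp : p.IsHomogeneous d) (z : σ → R) : eval (-z) p = (-1) ^ d * eval z p := by
  simp only [eval_eq, Finset.mul_sum]
  refine Finset.sum_congr rfl fun m hm => ?_
  have hdeg : ∑ k ∈ m.support, m k = d := (hp.degree_eq_sum_deg_support hm).symm
  simp only [Pi.neg_apply, neg_pow (z _), Finset.prod_mul_distrib, Finset.prod_pow_eq_pow_sum, hdeg]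
  ring

section SumOfSquares

variable {σ ι κ R : Type*} [Fintype ι] [Fintype κ] [CommRing R] [LinearOrder R]
  [IsStrictOrderedRing R] {u : ι → MvPolynomial σ R} {v : κ → MvPolynomial σ R}

theorem eq_zero_of_sum_sq_eq_zero_s17 (h : ∑ i, u i ^ 2 = 0) (i : ι) : u i = 0 := by
  refine MvPolynomial.funext fun z => ?_
  have hz : ∑ i, eval z (u i) ^ 2 = 0 := by simpa using congrArg (eval z) h
  rw [Finset.sum_eq_zero_iff_of_nonneg fun _ _ => sq_nonneg _] at hz
  simpa using hz i (Finset.mem_univ i)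

-- The top-degree parts of squares cannot cancel.
theorem totalDegree_le_of_totalDegree_sum_sq_le {d : ℕ}
    (h : (∑ i, u i ^ 2).totalDegree ≤ 2 * d) (i : ι) : (u i).totalDegree ≤ d := by
  by_cases hu : ∃ i, u i ≠ 0
  · obtain ⟨k, hk, hmax⟩ := exists_ne_zero_forall_totalDegree_le hu
    refine (hmax i).trans ?_
    by_contra! hd
    have hcomp : ∑ i, homogeneousComponent (u k).totalDegree (u i) ^ 2 = 0 := by
      rw [← homogeneousComponent_sum_sq hmax]
      exact homogeneousComponent_eq_zero _ _ (by omega)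
    exact homogeneousComponent_totalDegree_ne_zero hk (eq_zero_of_sum_sq_eq_zero_s17 hcomp k)
  · push Not at hu
    simp [hu i]

theorem mul_sum_sq_homogeneousComponent {f : MvPolynomial σ R} {c d : ℕ}
    (hf : f.IsHomogeneous (2 * c)) (hv : ∀ j, (v j).totalDegree ≤ d)
    (h : f * ∑ j, v j ^ 2 = ∑ i, u i ^ 2) :
    f * ∑ j, homogeneousComponent d (v j) ^ 2 =
      ∑ i, homogeneousComponent (c + d) (u i) ^ 2 := by
  have hsq := totalDegree_sum_sq_le hv
  have hu : ∀ i, (u i).totalDegree ≤ c + d := totalDegree_le_of_totalDegree_sum_sq_le <| by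
    rw [← h, mul_add]
    exact (totalDegree_mul _ _).trans (add_le_add hf.totalDegree_le hsq)
  rw [← homogeneousComponent_sum_sq hv, ← homogeneousComponent_sum_sq hu, ← h, mul_add,
    homogeneousComponent_mul_of_totalDegree_le hf.totalDegree_le hsq,
    homogeneousComponent_eq_self hf]

theorem exists_isHomogeneous_mul_sum_sq_eq [Nonempty σ] {f : MvPolynomial σ R} {c d : ℕ}
    (hf : f.IsHomogeneous (2 * c)) (hv : ∀ j, (v j).totalDegree ≤ d) (hv₀ : ∃ j, v j ≠ 0)
    (h : f * ∑ j, v j ^ 2 = ∑ i, u i ^ 2) :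
    ∃ (u' : ι → MvPolynomial σ R) (v' : κ → MvPolynomial σ R),
      (∀ i, (u' i).IsHomogeneous (c + d)) ∧ (∀ j, (v' j).IsHomogeneous d) ∧
        (∃ j, v' j ≠ 0) ∧ f * ∑ j, v' j ^ 2 = ∑ i, u' i ^ 2 := by
  obtain ⟨k, hk, hmax⟩ := exists_ne_zero_forall_totalDegree_le hv₀
  set e := (v k).totalDegree
  have hed : d - e + e = d := Nat.sub_add_cancel (hv k)
  let x : MvPolynomial σ R := X (Classical.arbitrary σ) ^ (d - e)
  have hx : x.IsHomogeneous (d - e) := isHomogeneous_X_pow _ _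
  refine ⟨fun i => x * homogeneousComponent (c + e) (u i),
    fun j => x * homogeneousComponent e (v j), fun i => ?_, fun j => ?_, ⟨k, ?_⟩, ?_⟩
  · convert hx.mul (homogeneousComponent_isHomogeneous (c + e) (u i)) using 1
    omega
  · convert hx.mul (homogeneousComponent_isHomogeneous e (v j)) using 1
    exact hed.symm
  · exact mul_ne_zero (pow_ne_zero _ (X_ne_zero _)) (homogeneousComponent_totalDegree_ne_zero hk)
  · simp only [mul_pow, ← Finset.mul_sum]
    rw [← mul_sum_sq_homogeneousComponent hf hmax h]
    ring

end SumOfSquares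

section SecondDifference

variable {σ R : Type*} [CommRing R]

/-- The symmetric second difference `F (z + h) + F (z - h) - 2 F z`, as an operator on functions. -/
def secondDiff {M : Type*} [AddCommGroup M] (h : M) : (M → R) →ₗ[R] M → R :=
  LinearMap.funLeft R R (· + h) + LinearMap.funLeft R R (· - h) - 2 • LinearMap.id

theorem secondDiff_apply {M : Type*} [AddCommGroup M] (h : M) (F : M → R) (z : M) :
    secondDiff h F z = F (z + h) + F (z - h) - 2 * F z := by
  simp [secondDiff, LinearMap.funLeft_apply]

theorem secondDiff_comm {M : Type*} [AddCommGroup M] (h h' : M) (F : M → R) :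
    secondDiff h (secondDiff h' F) = secondDiff h' (secondDiff h F) := by
  funext z
  simp only [secondDiff_apply]
  rw [add_right_comm z h h', add_sub_right_comm z h h', ← add_sub_right_comm z h' h,
    sub_right_comm z h h']
  ring

variable [DecidableEq σ]

theorem secondDiff_eval_monomial {j : σ} {m : σ →₀ ℕ} (hm : m j ≤ 1) (c : R) :
    secondDiff (Pi.single j 1) (fun z => eval z (monomial m c)) = 0 := by
  have hsplit (z : σ → R) (ε : R) : eval (z + Pi.single j ε) (monomial m c) =
      c * ((z j + ε) ^ m j * (m.erase j).prod fun i e => z i ^ e) := by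
    rw [eval_monomial, ← Finsupp.mul_prod_erase' m j _ fun _ => pow_zero _]
    congr 2
    · simp
    · refine Finsupp.prod_congr fun i hi => ?_
      have hij : i ≠ j := by rintro rfl; simp at hi
      simp [hij]
  funext z
  have hzero := hsplit z 0
  rw [Pi.single_zero, add_zero] at hzero
  rw [secondDiff_apply, sub_eq_add_neg z, ← Pi.single_neg, hsplit, hsplit, hzero, Pi.zero_apply]
  interval_cases m j <;> ring

theorem secondDiff_secondDiff_secondDiff_eval {p : MvPolynomial σ R} (hp : p.totalDegree ≤ 5)
    {j k l : σ} (hjk : j ≠ k) (hjl : j ≠ l) (hkl : k ≠ l) :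
    secondDiff (Pi.single j 1) (secondDiff (Pi.single k 1)
      (secondDiff (Pi.single l 1) fun z => eval z p)) = 0 := by
  have hsum : (fun z => eval z p) = ∑ m ∈ p.support, fun z => eval z (monomial m (coeff m p)) := by
    funext z
    conv_lhs => rw [p.as_sum, map_sum]
    rw [Finset.sum_apply]
  rw [hsum]
  simp only [map_sum]
  refine Finset.sum_eq_zero fun m hm => ?_
  have hdeg : m j + (m k + m l) ≤ 5 := by
    have hle : ∑ i ∈ {j, k, l}, m i ≤ m.degree :=
      Finset.sum_le_sum_of_ne_zero fun i _ hi => Finsupp.mem_support_iff.mpr hi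
    rw [Finset.sum_insert (by simp [hjk, hjl]), Finset.sum_pair hkl] at hle
    exact hle.trans ((le_totalDegree hm).trans hp)
  obtain hj | hk | hl : m j ≤ 1 ∨ m k ≤ 1 ∨ m l ≤ 1 := by omega
  · rw [secondDiff_comm (Pi.single k 1), secondDiff_comm (Pi.single j 1),
      secondDiff_comm (Pi.single j 1), secondDiff_eval_monomial hj, map_zero, map_zero]
  · rw [secondDiff_comm (Pi.single k 1), secondDiff_eval_monomial hk, map_zero, map_zero]
  · rw [secondDiff_eval_monomial hl, map_zero, map_zero]

end SecondDifference

section SignVectors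

/-- The vectors with entries `±1` on `B` and `0` elsewhere (if `R` has no zero divisors), encoded by
the squares of the entries. -/
def signVectors {σ : Type*} (R : Type*) [DecidableEq σ] [Semiring R] (B : Finset σ) :
    Set (σ → R) :=
  {z | ∀ k, z k ^ 2 = if k ∈ B then 1 else 0}

variable {σ R : Type*} [DecidableEq σ] [CommRing R] {B : Finset σ} {z : σ → R}
  {i j k l s : σ}

theorem single_mem_signVectors : Pi.single i 1 ∈ signVectors R {i} := by
  intro k
  obtain rfl | hk := eq_or_ne k i <;> simp [*]

variable [NoZeroDivisors R]

theorem add_single_mem_signVectors (hz : z ∈ signVectors R B) (hs : s ∉ B) {ε : R}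
    (hε : ε ^ 2 = 1) : z + Pi.single s ε ∈ signVectors R (insert s B) := by
  intro k
  obtain rfl | hk := eq_or_ne k s
  · have hzk : z k = 0 := by simpa [hs] using hz k
    simp [hzk, hε]
  · simpa [hk] using hz k

theorem add_mem_and_sub_mem_signVectors (hz : z ∈ signVectors R B) (hs : s ∉ B) :
    z + Pi.single s 1 ∈ signVectors R (insert s B) ∧
      z - Pi.single s 1 ∈ signVectors R (insert s B) := by
  refine ⟨add_single_mem_signVectors hz hs (one_pow 2), ?_⟩
  rw [sub_eq_add_neg, ← Pi.single_neg]
  exact add_single_mem_signVectors hz hs (by norm_num)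

variable {F : (σ → R) → R}
  (hF : ∀ B : Finset σ, B.card = 3 ∨ B.card = 4 → ∀ z ∈ signVectors R B, F z = 0)

include hF

theorem secondDiff_eq_of_mem_signVectors (hz : z ∈ signVectors R B) (hs : s ∉ B)
    (hB : B.card = 2 ∨ B.card = 3) : secondDiff (Pi.single s 1) F z = -2 * F z := by
  have hcard : (insert s B).card = 3 ∨ (insert s B).card = 4 := by
    rw [Finset.card_insert_of_notMem hs]
    omega
  obtain ⟨hadd, hsub⟩ := add_mem_and_sub_mem_signVectors hz hs
  rw [secondDiff_apply, hF _ hcard _ hadd, hF _ hcard _ hsub]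
  ring

theorem secondDiff_secondDiff_eq_of_mem_signVectors (hz : z ∈ signVectors R B) (hB : B.card = 2)
    (hk : k ∉ B) (hl : l ∉ B) (hkl : k ≠ l) :
    secondDiff (Pi.single k 1) (secondDiff (Pi.single l 1) F) z = 4 * F z := by
  have hcard : (insert k B).card = 3 := by rw [Finset.card_insert_of_notMem hk, hB]
  have hl' : l ∉ insert k B := by simp [hl, hkl.symm]
  obtain ⟨hadd, hsub⟩ := add_mem_and_sub_mem_signVectors hz hk
  rw [secondDiff_apply, secondDiff_eq_of_mem_signVectors hF hadd hl' (.inr hcard),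
    secondDiff_eq_of_mem_signVectors hF hsub hl' (.inr hcard),
    secondDiff_eq_of_mem_signVectors hF hz hl (.inl hB), hF _ (.inl hcard) _ hadd,
    hF _ (.inl hcard) _ hsub]
  ring

theorem sum_three_of_secondDiff_eq_zero [CharZero R] (hz : z ∈ signVectors R {i}) (hj : j ≠ i)
    (hk : k ≠ i) (hl : l ≠ i) (hjk : j ≠ k) (hjl : j ≠ l) (hkl : k ≠ l)
    (hdiff : secondDiff (Pi.single j 1) (secondDiff (Pi.single k 1)
      (secondDiff (Pi.single l 1) F)) = 0) :
    (F (z + Pi.single j 1) + F (z - Pi.single j 1)) +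
      (F (z + Pi.single k 1) + F (z - Pi.single k 1)) +
      (F (z + Pi.single l 1) + F (z - Pi.single l 1)) = 2 * F z := by
  obtain ⟨hjadd, hjsub⟩ := add_mem_and_sub_mem_signVectors hz (Finset.notMem_singleton.mpr hj)
  obtain ⟨hkadd, hksub⟩ := add_mem_and_sub_mem_signVectors hz (Finset.notMem_singleton.mpr hk)
  have hcard_j : (insert j {i} : Finset σ).card = 2 := Finset.card_pair hj
  have hcard_k : (insert k {i} : Finset σ).card = 2 := Finset.card_pair hk
  have hkB : k ∉ (insert j {i} : Finset σ) := by simp [hk, hjk.symm]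
  have hlB : l ∉ (insert j {i} : Finset σ) := by simp [hl, hjl.symm]
  have hlB' : l ∉ (insert k {i} : Finset σ) := by simp [hl, hkl.symm]
  have hz₀ := congrFun hdiff z
  rw [secondDiff_apply,
    secondDiff_secondDiff_eq_of_mem_signVectors hF hjadd hcard_j hkB hlB hkl,
    secondDiff_secondDiff_eq_of_mem_signVectors hF hjsub hcard_j hkB hlB hkl,
    secondDiff_apply (Pi.single k 1),
    secondDiff_eq_of_mem_signVectors hF hkadd hlB' (.inl hcard_k),
    secondDiff_eq_of_mem_signVectors hF hksub hlB' (.inl hcard_k), secondDiff_apply,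
    Pi.zero_apply] at hz₀
  refine mul_left_cancel₀ (OfNat.ofNat_ne_zero 4 : (4 : R) ≠ 0) ?_
  linear_combination hz₀

end SignVectors

section VanishingPolynomial

variable {σ R : Type*} [Fintype σ] [DecidableEq σ] [CommRing R] [NoZeroDivisors R]
  [CharZero R] {u : MvPolynomial σ R} {i j : σ}

theorem three_mul_eval_add_single_add_eval_sub_single (hσ : 5 ≤ Fintype.card σ)
    (hdeg : u.totalDegree ≤ 5)
    (hu : ∀ B : Finset σ, B.card = 3 ∨ B.card = 4 → ∀ z ∈ signVectors R B, eval z u = 0)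
    {z : σ → R} (hz : z ∈ signVectors R {i}) (hij : i ≠ j) :
    3 * (eval (z + Pi.single j 1) u + eval (z - Pi.single j 1) u) = 2 * eval z u := by
  have hcard : 2 < (({i, j} : Finset σ)ᶜ).card := by
    rw [Finset.card_compl, Finset.card_pair hij]
    omega
  obtain ⟨a, ha, b, hb, c, hc, hab, hac, hbc⟩ := Finset.two_lt_card.mp hcard
  simp only [Finset.mem_compl, Finset.mem_insert, Finset.mem_singleton, not_or] at ha hb hc
  have hsum {x y w : σ} (hx : x ≠ i) (hy : y ≠ i) (hw : w ≠ i) (hxy : x ≠ y) (hxw : x ≠ w)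
      (hyw : y ≠ w) := sum_three_of_secondDiff_eq_zero hu hz hx hy hw hxy hxw hyw
    (secondDiff_secondDiff_secondDiff_eval hdeg hxy hxw hyw)
  linear_combination hsum ha.1 hb.1 hij.symm hab ha.2 hb.2
    + hsum ha.1 hc.1 hij.symm hac ha.2 hc.2
    + hsum hb.1 hc.1 hij.symm hbc hb.2 hc.2 - 2 * hsum ha.1 hb.1 hc.1 hab hac hbc

theorem nine_mul_eval_sq_add_eval_sq (hσ : 5 ≤ Fintype.card σ) (hhom : u.IsHomogeneous 5)
    (hu : ∀ B : Finset σ, B.card = 3 ∨ B.card = 4 → ∀ z ∈ signVectors R B, eval z u = 0)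
    (hij : i ≠ j) :
    9 * (eval (Pi.single i 1 + Pi.single j 1) u ^ 2 +
        eval (Pi.single i 1 - Pi.single j 1) u ^ 2) =
      2 * (eval (Pi.single i 1) u ^ 2 + eval (Pi.single j 1) u ^ 2) := by
  have hi := three_mul_eval_add_single_add_eval_sub_single hσ hhom.totalDegree_le hu
    single_mem_signVectors hij
  have hj := three_mul_eval_add_single_add_eval_sub_single hσ hhom.totalDegree_le hu
    single_mem_signVectors hij.symm
  rw [add_comm (Pi.single j 1), ← neg_sub, eval_neg_of_isHomogeneous hhom] at hj
  set a := eval (Pi.single i 1 + Pi.single j 1) u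
  set b := eval (Pi.single i 1 - Pi.single j 1) u
  refine mul_left_cancel₀ (two_ne_zero : (2 : R) ≠ 0) ?_
  linear_combination (3 * (a + b) + 2 * eval (Pi.single i 1) u) * hi
    + (3 * (a - b) + 2 * eval (Pi.single j 1) u) * hj

end VanishingPolynomial

section QuadraticForm

theorem exists_quadraticForm_eq_eval {σ R : Type*} [CommRing R] {p : MvPolynomial σ R}
    (hp : p.IsHomogeneous 2) : ∃ Q : QuadraticForm R (σ → R), ∀ z, Q z = eval z p := by
  rw [← mem_homogeneousSubmodule, ← homogeneousSubmodule_one_pow,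
    homogeneousSubmodule_one_eq_span_X, sq, Submodule.span_mul_span] at hp
  induction hp using Submodule.span_induction with
  | mem p hp =>
    obtain ⟨_, ⟨i, rfl⟩, _, ⟨j, rfl⟩, rfl⟩ := hp
    exact ⟨QuadraticMap.proj i j, fun z => by simp⟩
  | zero => exact ⟨0, fun z => by simp⟩
  | add p q _ _ hp hq =>
    obtain ⟨P, hP⟩ := hp
    obtain ⟨Q, hQ⟩ := hq
    exact ⟨P + Q, fun z => by simp [hP, hQ]⟩
  | smul c p _ hp =>
    obtain ⟨P, hP⟩ := hp
    exact ⟨c • P, fun z => by simp [hP]⟩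

theorem quadraticForm_eq_zero_of_single {σ R : Type*} [Finite σ] [DecidableEq σ] [CommRing R]
    [NoZeroDivisors R] [CharZero R] {Q : QuadraticForm R (σ → R)}
    (hself : ∀ i, Q (Pi.single i 1) = 0)
    (hpolar : ∀ i j, i ≠ j → QuadraticMap.polar Q (Pi.single i 1) (Pi.single j 1) = 0) :
    Q = 0 := by
  have hbilin : Q.polarBilin = 0 := by
    refine (Pi.basisFun R σ).ext fun i => (Pi.basisFun R σ).ext fun j => ?_
    obtain rfl | hij := eq_or_ne i j
    · simp [QuadraticMap.polar_self, hself]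
    · simpa using hpolar i j hij
  ext z
  have hz : QuadraticMap.polar Q z z = 0 := DFunLike.congr_fun (DFunLike.congr_fun hbilin z) z
  simpa [QuadraticMap.polar_self] using hz

theorem sum_eq_zero_of_parallelogram {κ R M : Type*} [Fintype κ] [CommRing R] [AddCommGroup M]
    [Module R M] {Q : κ → QuadraticForm R M} {x y : M}
    (h : 3 * ∑ k, (Q k (x + y) ^ 2 + Q k (x - y) ^ 2) = ∑ k, (Q k x ^ 2 + Q k y ^ 2)) :
    ∑ k, (5 * Q k x ^ 2 + 5 * Q k y ^ 2 + 12 * (Q k x * Q k y) +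
      6 * QuadraticMap.polar (Q k) x y ^ 2) = 0 := by
  have hsub (k : κ) : Q k (x - y) = Q k x + Q k y - QuadraticMap.polar (Q k) x y := by
    have := QuadraticMap.polar_neg_right (Q := Q k) x y
    rw [QuadraticMap.polar, QuadraticMap.map_neg, ← sub_eq_add_neg] at this
    linear_combination this
  have hadd (k : κ) : Q k (x + y) = Q k x + Q k y + QuadraticMap.polar (Q k) x y := by
    rw [QuadraticMap.polar]
    ring
  simp only [hsub, hadd] at h
  rw [Finset.mul_sum, ← sub_eq_zero, ← Finset.sum_sub_distrib] at h
  rw [← h]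
  exact Finset.sum_congr rfl fun k _ => by ring

variable {κ R : Type*} [Fintype κ] [CommRing R] [LinearOrder R] [IsStrictOrderedRing R]

theorem eq_zero_and_polar_eq_zero_of_parallelogram {M : Type*} [AddCommGroup M] [Module R M]
    {Q : κ → QuadraticForm R M} {x y w : M}
    (hxy : 3 * ∑ k, (Q k (x + y) ^ 2 + Q k (x - y) ^ 2) = ∑ k, (Q k x ^ 2 + Q k y ^ 2))
    (hxw : 3 * ∑ k, (Q k (x + w) ^ 2 + Q k (x - w) ^ 2) = ∑ k, (Q k x ^ 2 + Q k w ^ 2))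
    (hyw : 3 * ∑ k, (Q k (y + w) ^ 2 + Q k (y - w) ^ 2) = ∑ k, (Q k y ^ 2 + Q k w ^ 2))
    (k : κ) : Q k x = 0 ∧ QuadraticMap.polar (Q k) x y = 0 := by
  have hsum : ∑ k, (4 * (Q k x ^ 2 + Q k y ^ 2 + Q k w ^ 2) + 6 * (Q k x + Q k y + Q k w) ^ 2 +
      6 * (QuadraticMap.polar (Q k) x y ^ 2 + QuadraticMap.polar (Q k) x w ^ 2 +
        QuadraticMap.polar (Q k) y w ^ 2)) = 0 := by
    have hpairs := congrArg₂ (· + ·) (congrArg₂ (· + ·) (sum_eq_zero_of_parallelogram hxy)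
      (sum_eq_zero_of_parallelogram hxw)) (sum_eq_zero_of_parallelogram hyw)
    simp only [← Finset.sum_add_distrib, add_zero] at hpairs
    rw [← hpairs]
    exact Finset.sum_congr rfl fun k _ => by ring
  rw [Finset.sum_eq_zero_iff_of_nonneg fun _ _ => by positivity] at hsum
  have hk := hsum k (Finset.mem_univ k)
  constructor <;> refine sq_eq_zero_iff.mp (le_antisymm ?_ (sq_nonneg _))
  · linarith [sq_nonneg (Q k y), sq_nonneg (Q k w), sq_nonneg (Q k x + Q k y + Q k w),
      sq_nonneg (QuadraticMap.polar (Q k) x y), sq_nonneg (QuadraticMap.polar (Q k) x w),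
      sq_nonneg (QuadraticMap.polar (Q k) y w)]
  · linarith [sq_nonneg (Q k x), sq_nonneg (Q k y), sq_nonneg (Q k w),
      sq_nonneg (Q k x + Q k y + Q k w), sq_nonneg (QuadraticMap.polar (Q k) x w),
      sq_nonneg (QuadraticMap.polar (Q k) y w)]

theorem quadraticForm_eq_zero_of_parallelogram {σ : Type*} [Fintype σ] [DecidableEq σ]
    (hσ : 3 ≤ Fintype.card σ) {Q : κ → QuadraticForm R (σ → R)}
    (h : ∀ i j : σ, i ≠ j → 3 * ∑ k, (Q k (Pi.single i 1 + Pi.single j 1) ^ 2 +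
      Q k (Pi.single i 1 - Pi.single j 1) ^ 2) =
        ∑ k, (Q k (Pi.single i 1) ^ 2 + Q k (Pi.single j 1) ^ 2)) (k : κ) : Q k = 0 := by
  have hthird (i j : σ) : ∃ m, m ≠ i ∧ m ≠ j := by
    obtain ⟨m, -, hm⟩ := Finset.exists_mem_notMem_of_card_lt_card
      (Finset.card_le_two.trans_lt hσ : ({i, j} : Finset σ).card < Finset.univ.card)
    exact ⟨m, by simpa using hm⟩
  have hvanish {i j : σ} (hij : i ≠ j) : Q k (Pi.single i 1) = 0 ∧
      QuadraticMap.polar (Q k) (Pi.single i 1) (Pi.single j 1) = 0 := by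
    obtain ⟨m, hmi, hmj⟩ := hthird i j
    exact eq_zero_and_polar_eq_zero_of_parallelogram (h i j hij) (h i m hmi.symm)
      (h j m hmj.symm) k
  refine quadraticForm_eq_zero_of_single (fun i => ?_) (fun i j hij => (hvanish hij).2)
  obtain ⟨j, hj, -⟩ := hthird i i
  exact (hvanish hj.symm).1

end QuadraticForm

section EvenSextic

/-- The even symmetric sextic `f_{n,k}` of the paper, with a real parameter `k`. -/
noncomputable def evenSextic (n : ℕ) (k : ℝ) : MvPolynomial (Fin n) ℝ :=
  C (k ^ 2 + k) * powerSum n 6 - C (2 * k + 1) * (powerSum n 2 * powerSum n 4) + powerSum n 2 ^ 3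

variable {n : ℕ}

theorem powerSum_isHomogeneous (n r : ℕ) : (powerSum n r).IsHomogeneous r :=
  IsHomogeneous.sum _ _ _ fun i _ => isHomogeneous_X_pow i r

theorem evenSextic_isHomogeneous (n : ℕ) (k : ℝ) : (evenSextic n k).IsHomogeneous 6 :=
  (((powerSum_isHomogeneous n 6).C_mul _).sub
    (((powerSum_isHomogeneous n 2).mul (powerSum_isHomogeneous n 4)).C_mul _)).add
      ((powerSum_isHomogeneous n 2).pow 3)

theorem eval_powerSum_of_mem_signVectors {B : Finset (Fin n)} {z : Fin n → ℝ}
    (hz : z ∈ signVectors ℝ B) {r : ℕ} (hr : r ≠ 0) : eval z (powerSum n (2 * r)) = B.card := by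
  have hpow (i : Fin n) : z i ^ (2 * r) = if i ∈ B then 1 else 0 := by
    rw [pow_mul, hz i, ite_pow, one_pow, zero_pow hr]
  simp [powerSum, hpow]

theorem eval_evenSextic_of_mem_signVectors {B : Finset (Fin n)} {z : Fin n → ℝ}
    (hz : z ∈ signVectors ℝ B) (k : ℝ) :
    eval z (evenSextic n k) = B.card * (B.card - k) * (B.card - k - 1) := by
  have h₂ := eval_powerSum_of_mem_signVectors hz one_ne_zero
  have h₄ := eval_powerSum_of_mem_signVectors hz two_ne_zero
  have h₆ := eval_powerSum_of_mem_signVectors hz three_ne_zero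
  norm_num only at h₂ h₄ h₆
  simp only [evenSextic, map_add, map_sub, map_mul, map_pow, eval_C, h₂, h₄, h₆]
  ring

theorem evenSextic_three (n : ℕ) : evenSextic n 3 =
    12 * powerSum n 6 - 7 * powerSum n 2 * powerSum n 4 + powerSum n 2 ^ 3 := by
  have h₁₂ : (3 : ℝ) ^ 2 + 3 = 12 := by norm_num
  have h₇ : 2 * (3 : ℝ) + 1 = 7 := by norm_num
  rw [evenSextic, h₁₂, h₇, map_ofNat, map_ofNat, mul_assoc 7]

variable {ι κ : Type*} [Fintype ι] [Fintype κ] {u : ι → MvPolynomial (Fin n) ℝ}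
  {v : κ → MvPolynomial (Fin n) ℝ} (h : evenSextic n 3 * ∑ j, v j ^ 2 = ∑ i, u i ^ 2)

include h

theorem sum_eval_sq_of_mem_signVectors {B : Finset (Fin n)} {z : Fin n → ℝ}
    (hz : z ∈ signVectors ℝ B) : ∑ i, eval z (u i) ^ 2 =
      B.card * (B.card - 3) * (B.card - 4) * ∑ j, eval z (v j) ^ 2 := by
  have hz' := congrArg (eval z) h
  simp only [map_mul, map_sum, map_pow, eval_evenSextic_of_mem_signVectors hz] at hz'
  linear_combination -hz'

theorem eval_eq_zero_of_mem_signVectors (B : Finset (Fin n)) (hB : B.card = 3 ∨ B.card = 4)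
    (z : Fin n → ℝ) (hz : z ∈ signVectors ℝ B) (i : ι) : eval z (u i) = 0 := by
  have hsum := sum_eval_sq_of_mem_signVectors h hz
  have hzero : ∑ i, eval z (u i) ^ 2 = 0 := by
    rw [hsum]
    obtain hB | hB := hB <;> simp [hB]
  rw [Finset.sum_eq_zero_iff_of_nonneg fun _ _ => sq_nonneg _] at hzero
  exact sq_eq_zero_iff.mp (hzero i (Finset.mem_univ i))

theorem three_mul_sum_eval_sq (hn : 5 ≤ n) (hu : ∀ i, (u i).IsHomogeneous 5) {a b : Fin n}
    (hab : a ≠ b) : 3 * ∑ j, (eval (Pi.single a 1 + Pi.single b 1) (v j) ^ 2 +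
        eval (Pi.single a 1 - Pi.single b 1) (v j) ^ 2) =
      ∑ j, (eval (Pi.single a 1) (v j) ^ 2 + eval (Pi.single b 1) (v j) ^ 2) := by
  have hu_sum := Finset.sum_congr rfl fun i (_ : i ∈ Finset.univ) =>
    nine_mul_eval_sq_add_eval_sq (by simpa using hn) (hu i)
      (fun B hB z hz => eval_eq_zero_of_mem_signVectors h B hB z hz i) hab
  obtain ⟨hadd, hsub⟩ := add_mem_and_sub_mem_signVectors (R := ℝ) (single_mem_signVectors (i := a))
    (Finset.notMem_singleton.mpr hab.symm)
  simp only [← Finset.mul_sum, Finset.sum_add_distrib, sum_eval_sq_of_mem_signVectors h hadd,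
    sum_eval_sq_of_mem_signVectors h hsub,
    sum_eval_sq_of_mem_signVectors h (single_mem_signVectors (i := a)),
    sum_eval_sq_of_mem_signVectors h (single_mem_signVectors (i := b)),
    Finset.card_pair hab.symm, Finset.card_singleton, Nat.cast_ofNat, Nat.cast_one] at hu_sum ⊢
  linear_combination hu_sum / 12

theorem eq_zero_of_evenSextic_mul_sum_sq (hn : 5 ≤ n) (hu : ∀ i, (u i).IsHomogeneous 5)
    (hv : ∀ j, (v j).IsHomogeneous 2) (j : κ) : v j = 0 := by
  choose Q hQ using fun j => exists_quadraticForm_eq_eval (hv j)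
  have hQ₀ : Q j = 0 := by
    refine quadraticForm_eq_zero_of_parallelogram (by rw [Fintype.card_fin]; omega)
      (fun a b hab => ?_) j
    simp only [hQ]
    exact three_mul_sum_eval_sq h hn hu hab
  refine MvPolynomial.funext fun z => ?_
  simp [← hQ j, hQ₀]

end EvenSextic

theorem statement17_general {n : ℕ} (hn : 5 ≤ n) :
    ¬ ∃ (l l' : ℕ) (u : Fin l → MvPolynomial (Fin n) ℝ)
        (v : Fin l' → MvPolynomial (Fin n) ℝ),
        (∀ j, (v j).totalDegree ≤ 2) ∧ (∑ j, v j ^ 2) ≠ 0 ∧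
        (12 * powerSum n 6 - 7 * powerSum n 2 * powerSum n 4 + (powerSum n 2) ^ 3) *
          (∑ j, v j ^ 2) = ∑ i, u i ^ 2 := by
  rintro ⟨l, l', u, v, hdeg, hne, h⟩
  rw [← evenSextic_three] at h
  have hv : ∃ j, v j ≠ 0 := by
    by_contra! hv
    simp [hv] at hne
  have : Nonempty (Fin n) := ⟨⟨0, by omega⟩⟩
  obtain ⟨u', v', hu', hv', ⟨j, hj⟩, h'⟩ :=
    exists_isHomogeneous_mul_sum_sq_eq (c := 3) (evenSextic_isHomogeneous n 3) hdeg hv h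
  exact hj (eq_zero_of_evenSextic_mul_sum_sq h' hn hu' hv' j)

/-- the even symmetric sextic
`f_{5,3} = 12·M₆ − 7·M₂·M₄ + M₂³` in `ℝ[X₁,…,X₅]` admits no Hilbert–Artin
representation with denominator of degree ≤ 4: there are no polynomials
`u₁,…,u_l, v₁,…,v_{l'}` with `deg(vⱼ) ≤ 2` for all `j` and `Σⱼ vⱼ² ≠ 0` such
that `f_{5,3} · Σⱼ vⱼ² = Σᵢ uᵢ²`. -/
theorem statement17 :
    ¬ ∃ (l l' : ℕ) (u : Fin l → MvPolynomial (Fin 5) ℝ)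
        (v : Fin l' → MvPolynomial (Fin 5) ℝ),
        (∀ j, (v j).totalDegree ≤ 2) ∧ (∑ j, v j ^ 2) ≠ 0 ∧
        (12 * powerSum 5 6 - 7 * powerSum 5 2 * powerSum 5 4 + (powerSum 5 2) ^ 3) *
          (∑ j, v j ^ 2) = ∑ i, u i ^ 2 := by
  exact statement17_general le_rfl
end
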